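/- arXiv:0802.2928 — 2 statements merged into one kernel-verified Lean document; each statement's English description precedes it below -/
import Mathlib

section
/- For every prime p, the set P = {n ∈ ℕ₀ : p ∤ n} of non-negative integers not divisible by p is an essentiality of the asymptotic basis A = ℕ₀ (which is an asymptotic basis of order 1): ℕ₀ \ P is not an asymptotic basis of any order, and P is minimal with respect to inclusion among subsets of ℕ₀ with this property. -/
/-- The `h`-fold sumset of `A ⊆ ℕ`: all sums of `h`-tuples of elements of `A`. -/
def Sumset (A : Set ℕ) (h : ℕ) : Set ℕ :=
  {n | ∃ l : List ℕ, l.length = h ∧ (∀ x ∈ l, x ∈ A) ∧ l.sum = n}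

/-- `A` is an asymptotic basis for `ℕ` of order `h`. -/
def IsBasisOfOrder (A : Set ℕ) (h : ℕ) : Prop :=
  0 ∈ A ∧ 1 ≤ h ∧ (Sumset A h)ᶜ.Finite

/-- `A` is an asymptotic basis for `ℕ` of some order. -/
def IsBasis (A : Set ℕ) : Prop := ∃ h, IsBasisOfOrder A h

/-- `P` is an essentiality of `A`: `A \ P` is not an asymptotic basis of any order,
and `P` is minimal (w.r.t. inclusion) among subsets of `A` with this property. -/
def IsEssentiality (A P : Set ℕ) : Prop :=
  P ⊆ A ∧ ¬ IsBasis (A \ P) ∧ ∀ Q ⊆ P, ¬ IsBasis (A \ Q) → Q = P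

/-- An essential subset is a finite essentiality. -/
def IsEssentialSubset (A P : Set ℕ) : Prop :=
  IsEssentiality A P ∧ P.Finite

/-!
Sums of multiples of `p` are multiples of `p`, whereas a cofinite set contains two consecutive
numbers, so a set of multiples of `p` is not an asymptotic basis. Conversely, suppose the multiples
of `p` in `A` are the dilate by `p` of a basis of order `h`, and some `a ∈ A` is not divisible by
`p`. As `a` is invertible modulo `p`, every large `n` is `k * a + p * m` with `k < p` and `m` large,
hence a sum of `k ≤ p - 1` copies of `a` and of `h` multiples of `p` in `A`. So a set of
non-multiples of `p` can be removed from `A` without destroying the basis property as soon as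
it leaves one such `a` behind.
-/

section Sumset

variable {A : Set ℕ} {a d h k m n : ℕ}

lemma sumset_one : Sumset A 1 = A := by
  ext n
  simp [Sumset, List.length_eq_one_iff]

lemma add_mem_sumset (hm : m ∈ Sumset A h) (hn : n ∈ Sumset A k) :
    m + n ∈ Sumset A (h + k) := by
  obtain ⟨s, rfl, hsA, rfl⟩ := hm
  obtain ⟨t, rfl, htA, rfl⟩ := hn
  exact ⟨s ++ t, List.length_append, List.forall_mem_append.mpr ⟨hsA, htA⟩, List.sum_append⟩

lemma mul_mem_sumset (ha : a ∈ A) (k : ℕ) : k * a ∈ Sumset A k :=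
  ⟨List.replicate k a, List.length_replicate, fun _ hx => List.eq_of_mem_replicate hx ▸ ha,
    List.sum_replicate_nat⟩

lemma sumset_subset_sumset_of_le (h0 : 0 ∈ A) (hhk : h ≤ k) : Sumset A h ⊆ Sumset A k := by
  intro n hn
  simpa [Nat.add_sub_cancel' hhk] using add_mem_sumset hn (mul_mem_sumset h0 (k - h))

lemma mul_mem_sumset_of_mem_sumset_preimage (hm : m ∈ Sumset ((d * ·) ⁻¹' A) h) :
    d * m ∈ Sumset A h := by
  obtain ⟨l, rfl, hlA, rfl⟩ := hm
  exact ⟨l.map (d * ·), List.length_map _, List.forall_mem_map.mpr hlA,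
    by simpa using List.sum_map_mul_left l id d⟩

lemma dvd_of_mem_sumset (hA : ∀ x ∈ A, d ∣ x) (hn : n ∈ Sumset A h) : d ∣ n := by
  obtain ⟨l, -, hlA, rfl⟩ := hn
  exact List.dvd_sum fun x hx => hA x (hlA x hx)

end Sumset

section Basis

variable {A : Set ℕ} {a d h : ℕ}

lemma isBasisOfOrder_univ_one : IsBasisOfOrder Set.univ 1 :=
  ⟨Set.mem_univ 0, le_rfl, by simp [sumset_one]⟩

lemma IsBasisOfOrder.exists_forall_ge_mem_sumset (hA : IsBasisOfOrder A h) :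
    ∃ N, ∀ n ≥ N, n ∈ Sumset A h := by
  have eventually_mem : ∀ᶠ n in Filter.cofinite, n ∈ Sumset A h := hA.2.2
  rwa [Nat.cofinite_eq_atTop, Filter.eventually_atTop] at eventually_mem

lemma not_isBasis_of_forall_dvd (hd : d ≠ 1) (hA : ∀ x ∈ A, d ∣ x) : ¬ IsBasis A := by
  rintro ⟨h, hbasis⟩
  obtain ⟨N, hN⟩ := hbasis.exists_forall_ge_mem_sumset
  have dvd_N : d ∣ N := dvd_of_mem_sumset hA (hN N le_rfl)
  have dvd_succ : d ∣ N + 1 := dvd_of_mem_sumset hA (hN (N + 1) N.le_succ)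
  exact hd (Nat.dvd_one.mp ((Nat.dvd_add_right dvd_N).mp dvd_succ))

lemma exists_eq_mul_add_mul_of_coprime (hd : d ≠ 0) (had : a.Coprime d) {N n : ℕ}
    (hn : d * a + d * N ≤ n) : ∃ k < d, ∃ m ≥ N, n = k * a + d * m := by
  obtain ⟨k, hkd, hkn⟩ : ∃ k < d, a * k ≡ n [MOD d] := Nat.exists_mul_mod_eq_of_coprime n had hd
  rw [mul_comm] at hkn
  have hka : k * a ≤ d * a := Nat.mul_le_mul_right a hkd.le
  obtain ⟨m, hm⟩ : d ∣ n - k * a := (Nat.modEq_iff_dvd' (by omega)).mp hkn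
  have hNm : d * N ≤ d * m := by omega
  exact ⟨k, hkd, m, Nat.le_of_mul_le_mul_left hNm (Nat.pos_of_ne_zero hd), by omega⟩

lemma IsBasisOfOrder.of_preimage_mul_of_coprime (hd : d ≠ 0)
    (hbasis : IsBasisOfOrder ((d * ·) ⁻¹' A) h) (ha : a ∈ A) (had : a.Coprime d) :
    IsBasisOfOrder A (d - 1 + h) := by
  have zero_mem : 0 ∈ A := by simpa using hbasis.1
  obtain ⟨N, hN⟩ := hbasis.exists_forall_ge_mem_sumset
  refine ⟨zero_mem, le_add_left hbasis.2.1,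
    (Set.finite_lt_nat (d * a + d * N)).subset fun n hn => ?_⟩
  contrapose! hn
  obtain ⟨k, hkd, m, hNm, rfl⟩ := exists_eq_mul_add_mul_of_coprime hd had (not_lt.mp hn)
  have ka_mem : k * a ∈ Sumset A (d - 1) :=
    sumset_subset_sumset_of_le zero_mem (Nat.le_sub_one_of_lt hkd) (mul_mem_sumset ha k)
  have dm_mem : d * m ∈ Sumset A h := mul_mem_sumset_of_mem_sumset_preimage (hN m hNm)
  exact not_not.mpr (add_mem_sumset ka_mem dm_mem)

end Basis

theorem non_multiples_essentiality_general {p : ℕ} (hp : p.Prime) {A : Set ℕ}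
    (hA : IsBasis ((p * ·) ⁻¹' A)) : IsEssentiality A {n ∈ A | ¬ p ∣ n} := by
  obtain ⟨h, hbasis⟩ := hA
  refine ⟨Set.sep_subset _ _, ?_, fun Q hQ hnot => hQ.antisymm fun a ⟨haA, hpa⟩ => ?_⟩
  · exact not_isBasis_of_forall_dvd hp.ne_one fun x ⟨hxA, hx⟩ => not_not.mp fun hpx => hx ⟨hxA, hpx⟩
  · by_contra haQ
    have preimage_diff : (p * ·) ⁻¹' (A \ Q) = (p * ·) ⁻¹' A :=
      Set.ext fun m => and_iff_left fun hmQ => (hQ hmQ).2 (dvd_mul_right p m)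
    have coprime : a.Coprime p := (hp.coprime_iff_not_dvd.mpr hpa).symm
    exact hnot ⟨p - 1 + h, .of_preimage_mul_of_coprime hp.ne_zero (preimage_diff ▸ hbasis)
      ⟨haA, haQ⟩ coprime⟩

/-- For every prime `p`, the set of naturals not divisible by `p` is an essentiality of
the basis `ℕ` (which is a basis of order 1). -/
theorem non_multiples_essentiality (p : ℕ) (hp : p.Prime) :
    IsBasisOfOrder Set.univ 1 ∧
      IsEssentiality (Set.univ : Set ℕ) {n : ℕ | ¬ p ∣ n} := by
  refine ⟨isBasisOfOrder_univ_one, ?_⟩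
  simpa using non_multiples_essentiality_general hp (A := Set.univ) ⟨1, isBasisOfOrder_univ_one⟩
end

section
/- Fix a positive integer k. For every ε > 0 there exists H such that for all integers h ≥ H, every asymptotic basis for ℕ₀ of order h contains at most (1+ε)·h essential subsets of cardinality at most k. (Equivalently, the maximal number φ(k,h) of essential subsets of size at most k in a basis of order h satisfies φ(k,h) ≤ (1+o(1))h as h → ∞ with k fixed.) -/
/-!
Let `A` be a basis of order `h` and `P` an essential subset of `A`. If `0 ∈ P` then `P = {0}`,
because a basis has to contain `0`. Otherwise `A \ P` has gcd different from `1`: replacing the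
elements of `P` in an `h`-fold sum by `0` changes the sum by a bounded amount `t`, and if the gcd
were `1`, then for a suitable `N` all these finitely many `N + t` would be sums of boundedly many
elements of `A \ P`, which would thus be a basis. By minimality `P` consists of the elements of
`A` not divisible by some prime `q`, so distinct essential subsets have distinct primes.

Given `n` such subsets of size at most `k`, let `M ≥ n!` be the product of their primes. All but
at most `k * n` elements of `A` vanish modulo `M`, yet every residue class modulo `M` is a sum of
`h` elements of `A`. Counting multisets gives `n! ≤ M ≤ (k * n + h).choose h ≤ 2 ^ (k * n + h)`,
which forces `n = o(h)`.
-/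

open Filter Set
-- On `Set ℕ` the scope `Pointwise` reads `h • A` as the `h`-fold sumset, not as the dilation.
open scoped Nat Pointwise

section Nsmul

variable {α : Type*}

lemma ncard_nsmul_le_multichoose [AddCommMonoid α] {s : Set α} (hs : s.Finite) (n : ℕ) :
    (n • s).ncard ≤ s.ncard.multichoose n := by
  have : Finite s := hs
  let sum : Sym s n → α := fun m => (m.1.map (↑)).sum
  have nsmul_subset_range : n • s ⊆ range sum := by
    intro x hx
    obtain ⟨f, rfl⟩ := mem_nsmul.1 hx
    exact ⟨⟨List.ofFn f, by simp⟩, by simp [sum, List.map_ofFn, Function.comp_def]⟩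
  calc (n • s).ncard ≤ (range sum).ncard := ncard_le_ncard nsmul_subset_range (finite_range sum)
    _ ≤ Nat.card (Sym s n) := Finite.card_range_le sum
    _ = s.ncard.multichoose n := Sym.natCard_sym_eq_multichoose s n

lemma exists_mem_nsmul_of_mem_closure [AddMonoid α] {s : Set α} {x : α}
    (hx : x ∈ AddSubmonoid.closure s) : ∃ n : ℕ, x ∈ n • s := by
  induction hx using AddSubmonoid.closure_induction with
  | mem x hx => exact ⟨1, by rwa [one_nsmul]⟩
  | zero => exact ⟨0, by simp⟩
  | add x y _ _ hx hy =>
    obtain ⟨m, hm⟩ := hx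
    obtain ⟨n, hn⟩ := hy
    exact ⟨m + n, by rw [add_nsmul]; exact add_mem_add hm hn⟩

lemma exists_subset_nsmul_of_subset_closure [AddMonoid α] {s t : Set α} (h0 : 0 ∈ s)
    (ht : t.Finite) (hts : t ⊆ AddSubmonoid.closure s) : ∃ n : ℕ, t ⊆ n • s := by
  have eventually_mem : ∀ᶠ n : ℕ in atTop, ∀ x ∈ t, x ∈ n • s := by
    refine (eventually_all_finite ht).2 fun x hx => ?_
    obtain ⟨m, hm⟩ := exists_mem_nsmul_of_mem_closure (hts hx)
    exact (eventually_ge_atTop m).mono fun n hmn => nsmul_subset_nsmul_right h0 hmn hm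
  exact eventually_mem.exists

lemma nsmul_Iic_subset [AddMonoid α] [Preorder α] [AddLeftMono α] [AddRightMono α] (m : α) (n : ℕ) :
    n • Iic m ⊆ Iic (n • m) := by
  intro x hx
  obtain ⟨f, rfl⟩ := mem_nsmul.1 hx
  have sum_le := List.sum_le_card_nsmul (List.ofFn fun i => (f i : α)) m
    (List.forall_mem_ofFn_iff.2 fun i => (f i).2)
  rwa [List.length_ofFn] at sum_le

lemma subset_diff_add_Iic [AddZeroClass α] [Preorder α] [CanonicallyOrderedAdd α] {s t : Set α}
    {m : α} (h0 : 0 ∈ s \ t) (hm : m ∈ upperBounds t) : s ⊆ s \ t + Iic m := by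
  intro a has
  by_cases hat : a ∈ t
  · exact ⟨0, h0, a, hm hat, zero_add a⟩
  · exact ⟨a, ⟨has, hat⟩, 0, zero_le, add_zero a⟩

end Nsmul

lemma factorial_card_le_prod {S : Finset ℕ} (hS : ∀ x ∈ S, 0 < x) : (S.card)! ≤ ∏ x ∈ S, x := by
  induction S using Finset.induction_on_max with
  | empty => simp
  | insert m S hm ih =>
    have notMem : m ∉ S := fun hmS => (hm m hmS).false
    have card_succ_le : S.card + 1 ≤ m := by
      have insert_subset : insert m S ⊆ Finset.Ioc 0 m := by grind
      simpa [notMem] using Finset.card_le_card insert_subset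
    rw [Finset.card_insert_of_notMem notMem, Finset.prod_insert notMem, Nat.factorial_succ]
    exact Nat.mul_le_mul card_succ_le (ih fun x hx => hS x (Finset.mem_insert_of_mem hx))

lemma eventually_le_mul_of_factorial_le_two_pow (k : ℕ) {c : ℝ} (hc : 0 < c) :
    ∀ᶠ h : ℕ in atTop, ∀ n : ℕ, n ! ≤ 2 ^ (k * n + h) → (n : ℝ) ≤ c * h := by
  obtain ⟨C, hC⟩ := exists_nat_ge c⁻¹
  obtain ⟨N, hN⟩ := eventually_atTop.1 (Nat.eventually_pow_lt_factorial_sub (2 ^ (k + C)) 0)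
  have eventually_ge : ∀ᶠ h : ℕ in atTop, (N : ℝ) ≤ c * h :=
    (tendsto_natCast_atTop_atTop.const_mul_atTop hc).eventually_ge_atTop _
  filter_upwards [eventually_ge] with h hh n hn
  by_contra! hlt
  have h_le : h ≤ C * n := by
    have : (h : ℝ) ≤ C * n := calc
      (h : ℝ) = c⁻¹ * (c * h) := by field_simp
      _ ≤ C * n := by gcongr
    exact_mod_cast this
  have pow_lt_factorial : (2 ^ (k + C)) ^ n < n ! := hN n (by exact_mod_cast hh.trans hlt.le)
  refine (hn.trans ?_).not_gt pow_lt_factorial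
  rw [← pow_mul, add_mul]
  exact Nat.pow_le_pow_right two_pos (Nat.add_le_add_left h_le _)

lemma sumset_eq_nsmul (A : Set ℕ) (h : ℕ) : Sumset A h = h • A := by
  ext n
  rw [mem_nsmul]
  constructor
  · rintro ⟨l, rfl, hl, rfl⟩
    exact ⟨fun i => ⟨l[i], hl _ (l.getElem_mem _)⟩, by simp⟩
  · rintro ⟨f, rfl⟩
    exact ⟨_, by simp, by simp [List.mem_ofFn], rfl⟩

lemma isBasisOfOrder_iff {A : Set ℕ} {h : ℕ} :
    IsBasisOfOrder A h ↔ 0 ∈ A ∧ 1 ≤ h ∧ ∀ᶠ n in atTop, n ∈ h • A := by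
  rw [IsBasisOfOrder, sumset_eq_nsmul, ← Nat.cofinite_eq_atTop]
  rfl

lemma not_isBasis_of_forall_dvd_s13 {B : Set ℕ} {q : ℕ} (hq : q ≠ 1) (hB : ∀ b ∈ B, q ∣ b) :
    ¬ IsBasis B := by
  rintro ⟨h, hbasis⟩
  have dvd_of_mem : ∀ n ∈ h • B, q ∣ n := fun n hn =>
    have nsmul_subset : h • B ⊆ (Ideal.span {q}).toAddSubmonoid :=
      AddSubmonoid.nsmul_subset fun b hb => Ideal.mem_span_singleton.2 (hB b hb)
    Ideal.mem_span_singleton.1 (nsmul_subset hn)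
  have eventually_mem := (isBasisOfOrder_iff.1 hbasis).2.2
  obtain ⟨n, hn, hn_succ⟩ :=
    (eventually_mem.and ((tendsto_add_atTop_nat 1).eventually eventually_mem)).exists
  exact hq (Nat.dvd_one.1 ((Nat.dvd_add_right (dvd_of_mem n hn)).1 (dvd_of_mem _ hn_succ)))

lemma isBasis_diff_of_setGcd_eq_one {A P : Set ℕ} (hA : IsBasis A) (hP : P.Finite)
    (h0P : 0 ∉ P) (hgcd : Nat.setGcd (A \ P) = 1) : IsBasis (A \ P) := by
  obtain ⟨h, hA⟩ := hA
  obtain ⟨h0A, one_le_h, eventually_mem⟩ := isBasisOfOrder_iff.1 hA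
  have h0 : 0 ∈ A \ P := ⟨h0A, h0P⟩
  obtain ⟨m, hm⟩ := hP.bddAbove
  have nsmul_subset : h • A ⊆ h • (A \ P) + Iic (h • m) := calc
    h • A ⊆ h • (A \ P + Iic m) := nsmul_subset_nsmul_left (subset_diff_add_Iic h0 hm)
    _ = h • (A \ P) + h • Iic m := nsmul_add ..
    _ ⊆ h • (A \ P) + Iic (h • m) := add_subset_add_left (nsmul_Iic_subset m h)
  obtain ⟨N, hN⟩ := Nat.exists_mem_closure_of_ge (A \ P)
  obtain ⟨R, hR⟩ : ∃ R : ℕ, Icc N (N + h • m) ⊆ R • (A \ P) :=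
    exists_subset_nsmul_of_subset_closure h0 (finite_Icc _ _) fun n hn =>
      hN n hn.1 (hgcd ▸ one_dvd n)
  refine ⟨h + R, isBasisOfOrder_iff.2 ⟨h0, by lia, ?_⟩⟩
  filter_upwards [(tendsto_sub_atTop_nat N).eventually eventually_mem, eventually_ge_atTop N]
    with n hn hNn
  obtain ⟨b, hb, t, ht, hbt⟩ := nsmul_subset hn
  have hn_eq : n = b + (N + t) := by lia
  rw [hn_eq, add_nsmul]
  exact add_mem_add hb (hR ⟨by lia, by gcongr; exact ht⟩)

/-- The elements of `A` not divisible by `q`: deleting them from `A` leaves only multiples of `q`.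
For prime `q` these are the candidates for essential subsets of `A`. -/
def nonMultiples (A : Set ℕ) (q : ℕ) : Set ℕ := {a ∈ A | ¬ q ∣ a}

lemma not_isBasis_diff_nonMultiples (A : Set ℕ) {q : ℕ} (hq : q ≠ 1) :
    ¬ IsBasis (A \ nonMultiples A q) :=
  not_isBasis_of_forall_dvd_s13 hq fun _ ha => by_contra fun hqa => ha.2 ⟨ha.1, hqa⟩

lemma nonMultiples_subset_of_forall_dvd {A P : Set ℕ} {q : ℕ} (h : ∀ a ∈ A \ P, q ∣ a) :
    nonMultiples A q ⊆ P :=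
  fun a ha => by_contra fun haP => ha.2 (h a ⟨ha.1, haP⟩)

lemma nonMultiples_prod_subset {A : Set ℕ} {S : Finset ℕ} (hS : ∀ q ∈ S, q.Prime) :
    nonMultiples A (∏ q ∈ S, q) ⊆ ⋃ q ∈ S, nonMultiples A q := by
  rintro a ⟨haA, ha⟩
  contrapose! ha
  refine Finset.prod_primes_dvd a (fun q hq => (hS q hq).prime) fun q hq => ?_
  by_contra hqa
  exact ha (mem_biUnion hq ⟨haA, hqa⟩)

lemma IsEssentiality.eq_singleton_zero {A P : Set ℕ} (hP : IsEssentiality A P) (h0 : 0 ∈ P) :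
    P = {0} :=
  (hP.2.2 {0} (singleton_subset_iff.2 h0) fun ⟨_, hbasis⟩ => hbasis.1.2 rfl).symm

lemma IsEssentialSubset.exists_prime_nonMultiples_eq {A P : Set ℕ} (hP : IsEssentialSubset A P)
    (hA : IsBasis A) (hne : P ≠ {0}) : ∃ q : ℕ, q.Prime ∧ nonMultiples A q = P := by
  have h0 : 0 ∉ P := fun h0 => hne (hP.1.eq_singleton_zero h0)
  obtain ⟨⟨-, not_isBasis, minimal⟩, hfin⟩ := hP
  have setGcd_ne_one : Nat.setGcd (A \ P) ≠ 1 := fun hgcd =>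
    not_isBasis (isBasis_diff_of_setGcd_eq_one hA hfin h0 hgcd)
  obtain ⟨q, hq, q_dvd⟩ := Nat.exists_prime_and_dvd setGcd_ne_one
  exact ⟨q, hq, minimal _ (nonMultiples_subset_of_forall_dvd (Nat.dvd_setGcd_iff.1 q_dvd))
    (not_isBasis_diff_nonMultiples A hq.ne_one)⟩

lemma natCast_image_eq_univ_of_eventually_mem {s : Set ℕ} (hs : ∀ᶠ n in atTop, n ∈ s) (M : ℕ)
    [NeZero M] : Nat.castAddMonoidHom (ZMod M) '' s = univ := by
  refine eq_univ_of_forall fun r => ?_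
  obtain ⟨n, hnr, hns⟩ :=
    ((Nat.frequently_modEq (NeZero.ne M) r.val).and_eventually hs).exists
  exact ⟨n, hns, by simpa using (ZMod.natCast_eq_natCast_iff _ _ _).2 hnr⟩

lemma natCast_image_subset_insert_nonMultiples (A : Set ℕ) (M : ℕ) :
    Nat.castAddMonoidHom (ZMod M) '' A ⊆
      insert 0 (Nat.castAddMonoidHom (ZMod M) '' nonMultiples A M) := by
  rintro _ ⟨a, ha, rfl⟩
  by_cases haM : M ∣ a
  · exact Or.inl ((ZMod.natCast_eq_zero_iff a M).2 haM)
  · exact Or.inr ⟨a, ⟨ha, haM⟩, rfl⟩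

lemma IsBasisOfOrder.le_multichoose_ncard_nonMultiples {A : Set ℕ} {h M : ℕ}
    (hA : IsBasisOfOrder A h) (hfin : (nonMultiples A M).Finite) :
    M ≤ ((nonMultiples A M).ncard + 1).multichoose h := by
  rcases eq_or_ne M 0 with rfl | hM
  · exact Nat.zero_le _
  have : NeZero M := ⟨hM⟩
  let residue := Nat.castAddMonoidHom (ZMod M)
  let F := insert 0 (residue '' nonMultiples A M)
  have F_finite : F.Finite := (hfin.image _).insert 0
  have nsmul_F : h • F = univ := by
    refine univ_subset_iff.1 ?_
    calc univ = residue '' (h • A) :=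
          (natCast_image_eq_univ_of_eventually_mem (isBasisOfOrder_iff.1 hA).2.2 M).symm
      _ = h • residue '' A := image_nsmul ..
      _ ⊆ h • F := nsmul_subset_nsmul_left (natCast_image_subset_insert_nonMultiples A M)
  have ncard_F : F.ncard ≤ (nonMultiples A M).ncard + 1 :=
    (ncard_insert_le _ _).trans (Nat.add_le_add_right (ncard_image_le hfin) 1)
  calc M = (h • F).ncard := by rw [nsmul_F, ncard_univ, Nat.card_zmod]
    _ ≤ F.ncard.multichoose h := ncard_nsmul_le_multichoose F_finite h
    _ ≤ ((nonMultiples A M).ncard + 1).multichoose h := by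
      rw [Nat.multichoose_eq, Nat.multichoose_eq]
      gcongr

lemma IsBasisOfOrder.factorial_card_primes_le_two_pow {A : Set ℕ} {h k : ℕ} {S : Finset ℕ}
    (hA : IsBasisOfOrder A h) (hprime : ∀ q ∈ S, q.Prime)
    (hfin : ∀ q ∈ S, (nonMultiples A q).Finite) (hcard : ∀ q ∈ S, (nonMultiples A q).ncard ≤ k) :
    (S.card)! ≤ 2 ^ (k * S.card + h) := by
  let M := ∏ q ∈ S, q
  have union_finite : (⋃ q ∈ S, nonMultiples A q).Finite := S.finite_toSet.biUnion hfin
  have subset_union : nonMultiples A M ⊆ ⋃ q ∈ S, nonMultiples A q :=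
    nonMultiples_prod_subset hprime
  have ncard_le : (nonMultiples A M).ncard ≤ k * S.card := calc
    (nonMultiples A M).ncard ≤ (⋃ q ∈ S, nonMultiples A q).ncard :=
      ncard_le_ncard subset_union union_finite
    _ ≤ ∑ q ∈ S, (nonMultiples A q).ncard := S.set_ncard_biUnion_le _
    _ ≤ S.card * k := Finset.sum_le_card_nsmul _ _ _ hcard
    _ = k * S.card := mul_comm _ _
  calc (S.card)! ≤ M := factorial_card_le_prod fun q hq => (hprime q hq).pos
    _ ≤ ((nonMultiples A M).ncard + 1).multichoose h :=
      hA.le_multichoose_ncard_nonMultiples (union_finite.subset subset_union)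
    _ = ((nonMultiples A M).ncard + h).choose h := by rw [Nat.multichoose_eq]; congr 1; lia
    _ ≤ 2 ^ ((nonMultiples A M).ncard + h) := Nat.choose_le_two_pow _ _
    _ ≤ 2 ^ (k * S.card + h) :=
      Nat.pow_le_pow_right two_pos (Nat.add_le_add_right ncard_le h)

lemma IsBasisOfOrder.factorial_card_essentialSubsets_le_two_pow {A : Set ℕ} {h k : ℕ}
    {Ps : Finset (Set ℕ)} (hA : IsBasisOfOrder A h) (h0 : {0} ∉ Ps)
    (hess : ∀ P ∈ Ps, IsEssentialSubset A P) (hcard : ∀ P ∈ Ps, P.ncard ≤ k) :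
    (Ps.card)! ≤ 2 ^ (k * Ps.card + h) := by
  classical
  have surjOn : SurjOn (nonMultiples A) {q | q.Prime} Ps := fun P hP =>
    (hess P hP).exists_prime_nonMultiples_eq ⟨h, hA⟩ (ne_of_mem_of_not_mem hP h0)
  obtain ⟨S, hprime, injOn, rfl⟩ := Finset.exists_subset_injOn_image_eq_of_surjOn _ _ surjOn
  rw [Finset.card_image_of_injOn injOn]
  rw [Finset.forall_mem_image] at hess hcard
  exact hA.factorial_card_primes_le_two_pow hprime (fun q hq => (hess hq).2) fun q hq => hcard hq

theorem essential_subsets_count_linear_in_order_general (k : ℕ) {c : ℝ} (hc : 0 < c) :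
    ∀ᶠ h : ℕ in atTop, ∀ A : Set ℕ, IsBasisOfOrder A h →
      ∀ Ps : Finset (Set ℕ), (∀ P ∈ Ps, IsEssentialSubset A P ∧ P.ncard ≤ k) →
        (Ps.card : ℝ) ≤ c * h := by
  classical
  have eventually_one_le : ∀ᶠ h : ℕ in atTop, 1 ≤ c / 2 * h :=
    (tendsto_natCast_atTop_atTop.const_mul_atTop (half_pos hc)).eventually_ge_atTop 1
  filter_upwards [eventually_le_mul_of_factorial_le_two_pow k (half_pos hc), eventually_one_le]
    with h le_of_factorial_le one_le A hA Ps hPs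
  have card_erase_le : ((Ps.erase {0}).card : ℝ) ≤ c / 2 * h :=
    le_of_factorial_le _ <| hA.factorial_card_essentialSubsets_le_two_pow (Ps.notMem_erase {0})
      (fun P hP => (hPs P (Finset.mem_of_mem_erase hP)).1)
      fun P hP => (hPs P (Finset.mem_of_mem_erase hP)).2
  have card_le : (Ps.card : ℝ) ≤ (Ps.erase {0}).card + 1 := by
    exact_mod_cast Nat.sub_le_iff_le_add.1 Finset.pred_card_le_card_erase
  linarith

/-- With `k` fixed, the number of essential subsets of size at most `k` in a basis of
order `h` is at most `(1+o(1))·h` as `h → ∞`. -/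
theorem essential_subsets_count_linear_in_order (k : ℕ) (hk : 0 < k) :
    ∀ ε : ℝ, 0 < ε → ∃ H : ℕ, ∀ h : ℕ, H ≤ h →
      ∀ A : Set ℕ, IsBasisOfOrder A h →
        ∀ Ps : Finset (Set ℕ), (∀ P ∈ Ps, IsEssentialSubset A P ∧ P.ncard ≤ k) →
          (Ps.card : ℝ) ≤ (1 + ε) * h :=
  fun _ hε => eventually_atTop.1 <|
    essential_subsets_count_linear_in_order_general k (add_pos one_pos hε)
end
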